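/- arXiv:2509.02212 — 3 statements merged into one kernel-verified Lean document; each statement's English description precedes it below -/
import Mathlib

section
/- Let H and U be real Hilbert spaces, B : U → H a bounded linear operator with adjoint B* : H → U, μ ∈ (0,1), and β > 0 such that ‖B*y‖² ≥ β‖y‖² for all y ∈ H. Let G : H → H be defined by G(y) = ‖B*y‖^{−μ} B B* y if B*y ≠ 0 and G(y) = 0 if B*y = 0. Let A₀ : H → H satisfy ⟨x, A₀x⟩ ≤ 0 for all x ∈ H, and let f : H → ℝ satisfy f(x) ≤ 0 for all x ∈ H. Suppose y : [0,∞) → H is differentiable and satisfies the closed-loop dynamics y'(t) = A₀(y(t)) + f(y(t))·y(t) − G(y(t)) for all t ≥ 0. Then, setting T = ‖y(0)‖^μ / (β^{1−μ/2} μ), one has ‖y(t)‖^μ ≤ ‖y(0)‖^μ − β^{1−μ/2} μ t for all t ∈ [0, T], and y(t) = 0 for all t ≥ T. -/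
open scoped RealInnerProductSpace Classical

/-!
Along a trajectory, dissipativity leaves `⟪y, y'⟫ ≤ -⟪y, G y⟫ = -‖B*y‖^(2-μ)`, and coercivity of
`B*` turns this into `⟪y, y'⟫ ≤ -c‖y‖^(2-μ)` with `c = β^(1-μ/2)`. Away from the origin this says
that `‖y‖^μ` decreases at rate at least `c μ`. As `‖y‖` is nonincreasing, a trajectory that is
nonzero at time `t` has been nonzero on all of `[0, t]`, so that `‖y t‖^μ ≤ ‖y 0‖^μ - c μ t`. From
time `T` on the right-hand side is nonpositive, which forces extinction.
-/

open Set

theorem sq_rpow_half {r : ℝ} (hr : 0 ≤ r) (p : ℝ) : (r ^ 2) ^ (p / 2) = r ^ p := by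
  rw [← Real.rpow_natCast_mul hr, Nat.cast_ofNat, mul_div_cancel₀ p two_ne_zero]

theorem rpow_half_mul_rpow_le_rpow {β p r s : ℝ} (hβ : 0 ≤ β) (hp : 0 ≤ p) (hr : 0 ≤ r)
    (hs : 0 ≤ s) (h : β * r ^ 2 ≤ s ^ 2) : β ^ (p / 2) * r ^ p ≤ s ^ p := by
  calc β ^ (p / 2) * r ^ p
      = (β * r ^ 2) ^ (p / 2) := by rw [Real.mul_rpow hβ (sq_nonneg r), sq_rpow_half hr]
    _ ≤ (s ^ 2) ^ (p / 2) := by gcongr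
    _ = s ^ p := sq_rpow_half hs p

section NormDecay

variable {H : Type*} [NormedAddCommGroup H] [InnerProductSpace ℝ H]

theorem hasDerivWithinAt_norm_rpow {y : ℝ → H} {y' : H} {s : Set ℝ} {t : ℝ}
    (hy : HasDerivWithinAt y y' s t) (hyt : y t ≠ 0) (p : ℝ) :
    HasDerivWithinAt (fun r ↦ ‖y r‖ ^ p) (p * ‖y t‖ ^ (p - 2) * ⟪y t, y'⟫) s t := by
  have h := hy.norm_sq.rpow_const (p := p / 2) (.inl (by positivity))
  rw [show p / 2 - 1 = (p - 2) / 2 by ring] at h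
  simp only [sq_rpow_half, norm_nonneg] at h
  exact h.congr_deriv (by ring)

variable {y y' : ℝ → H} {a b c μ : ℝ}

theorem norm_le_of_inner_deriv_right_nonpos (hab : a ≤ b) (hy : ContinuousOn y (Icc a b))
    (hy' : ∀ t ∈ Ico a b, HasDerivWithinAt y (y' t) (Ici t) t)
    (hinner : ∀ t ∈ Ico a b, ⟪y t, y' t⟫ ≤ 0) : ‖y b‖ ≤ ‖y a‖ := by
  have hsq : ‖y b‖ ^ 2 ≤ ‖y a‖ ^ 2 :=
    image_le_of_deriv_right_le_deriv_boundary (f := (‖y ·‖ ^ 2)) (B := fun _ ↦ ‖y a‖ ^ 2)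
      (hy.norm.pow 2) (fun t ht ↦ (hy' t ht).norm_sq) le_rfl continuousOn_const
      (fun t _ ↦ hasDerivWithinAt_const t _ _) (fun t ht ↦ by linarith [hinner t ht])
      (right_mem_Icc.mpr hab)
  exact (sq_le_sq₀ (norm_nonneg _) (norm_nonneg _)).mp hsq

theorem norm_rpow_le_sub_of_forall_ne_zero (hμ : 0 ≤ μ) (hab : a ≤ b)
    (hy : ContinuousOn y (Icc a b))
    (hy' : ∀ t ∈ Ico a b, HasDerivWithinAt y (y' t) (Ici t) t)
    (hne : ∀ t ∈ Ico a b, y t ≠ 0)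
    (hinner : ∀ t ∈ Ico a b, ⟪y t, y' t⟫ ≤ -(c * ‖y t‖ ^ (2 - μ))) :
    ‖y b‖ ^ μ ≤ ‖y a‖ ^ μ - c * μ * (b - a) := by
  have hrate (t : ℝ) (ht : t ∈ Ico a b) :
      μ * ‖y t‖ ^ (μ - 2) * ⟪y t, y' t⟫ ≤ -(c * μ) := by
    have hpos : 0 < ‖y t‖ := norm_pos_iff.mpr (hne t ht)
    have hcancel : ‖y t‖ ^ (μ - 2) * ‖y t‖ ^ (2 - μ) = 1 := by
      rw [← Real.rpow_add hpos, sub_add_sub_cancel, sub_self, Real.rpow_zero]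
    calc μ * ‖y t‖ ^ (μ - 2) * ⟪y t, y' t⟫
        ≤ μ * ‖y t‖ ^ (μ - 2) * -(c * ‖y t‖ ^ (2 - μ)) := by
          gcongr
          exact hinner t ht
      _ = -(c * μ) := by linear_combination -(c * μ) * hcancel
  have hline (t : ℝ) :
      HasDerivWithinAt (fun s ↦ ‖y a‖ ^ μ - c * μ * (s - a)) (-(c * μ)) (Ici t) t := by
    simpa using (((hasDerivWithinAt_id t _).sub_const a).const_mul (c * μ)).const_sub (‖y a‖ ^ μ)
  exact image_le_of_deriv_right_le_deriv_boundary (hy.norm.rpow_const fun _ _ ↦ .inr hμ)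
    (fun t ht ↦ hasDerivWithinAt_norm_rpow (hy' t ht) (hne t ht) μ)
    (by simp) (by fun_prop) (fun t _ ↦ hline t) hrate (right_mem_Icc.mpr hab)

theorem norm_rpow_le_sub_of_ne_zero (hμ : 0 ≤ μ) (hc : 0 ≤ c) (hab : a ≤ b)
    (hy : ContinuousOn y (Icc a b))
    (hy' : ∀ t ∈ Ico a b, HasDerivWithinAt y (y' t) (Ici t) t)
    (hinner : ∀ t ∈ Ico a b, y t ≠ 0 → ⟪y t, y' t⟫ ≤ -(c * ‖y t‖ ^ (2 - μ)))
    (hb : y b ≠ 0) :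
    ‖y b‖ ^ μ ≤ ‖y a‖ ^ μ - c * μ * (b - a) := by
  have hnonpos (t : ℝ) (ht : t ∈ Ico a b) : ⟪y t, y' t⟫ ≤ 0 := by
    by_cases h : y t = 0
    · simp [h]
    · exact (hinner t ht h).trans (neg_nonpos.mpr (by positivity))
  have hne (t : ℝ) (ht : t ∈ Ico a b) : y t ≠ 0 := by
    have hle : ‖y b‖ ≤ ‖y t‖ :=
      norm_le_of_inner_deriv_right_nonpos ht.2.le (hy.mono (Icc_subset_Icc_left ht.1))
        (fun s hs ↦ hy' s ⟨ht.1.trans hs.1, hs.2⟩)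
        (fun s hs ↦ hnonpos s ⟨ht.1.trans hs.1, hs.2⟩)
    exact norm_pos_iff.mp ((norm_pos_iff.mpr hb).trans_le hle)
  exact norm_rpow_le_sub_of_forall_ne_zero hμ hab hy hy' hne
    fun t ht ↦ hinner t ht (hne t ht)

theorem norm_rpow_le_sub_and_eq_zero_of_inner_deriv_right_le (hμ : 0 < μ) (hc : 0 < c)
    (hy : ContinuousOn y (Ici 0))
    (hy' : ∀ t, 0 ≤ t → HasDerivWithinAt y (y' t) (Ici t) t)
    (hinner : ∀ t, 0 ≤ t → y t ≠ 0 → ⟪y t, y' t⟫ ≤ -(c * ‖y t‖ ^ (2 - μ)))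
    {T : ℝ} (hT : T = ‖y 0‖ ^ μ / (c * μ)) :
    (∀ t ∈ Icc 0 T, ‖y t‖ ^ μ ≤ ‖y 0‖ ^ μ - c * μ * t) ∧ ∀ t, T ≤ t → y t = 0 := by
  have hcμ : 0 < c * μ := mul_pos hc hμ
  have hT₀ : 0 ≤ T := hT ▸ by positivity
  have hcμT : c * μ * T = ‖y 0‖ ^ μ := by rw [hT, mul_div_cancel₀ _ hcμ.ne']
  have hdecay (t : ℝ) (ht : 0 ≤ t) (hyt : y t ≠ 0) : ‖y t‖ ^ μ ≤ ‖y 0‖ ^ μ - c * μ * t := by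
    simpa using norm_rpow_le_sub_of_ne_zero hμ.le hc.le ht (hy.mono Icc_subset_Ici_self)
      (fun s hs ↦ hy' s hs.1) (fun s hs ↦ hinner s hs.1) hyt
  refine ⟨fun t ht ↦ ?_, fun t ht ↦ ?_⟩
  · by_cases hyt : y t = 0
    · have hle : c * μ * t ≤ c * μ * T := by gcongr; exact ht.2
      simpa [hyt, Real.zero_rpow hμ.ne', ← hcμT] using hle
    · exact hdecay t ht.1 hyt
  · by_contra hyt
    have hpos : 0 < ‖y t‖ ^ μ := by positivity
    have hle : c * μ * T ≤ c * μ * t := by gcongr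
    linarith [hdecay t (hT₀.trans ht) hyt]

end NormDecay

section Feedback

variable {H U : Type*} [NormedAddCommGroup H] [InnerProductSpace ℝ H]
  [NormedAddCommGroup U] [InnerProductSpace ℝ U] {B : U → H} {C : H → U}

theorem inner_norm_rpow_smul_adjoint (hBC : ∀ x u, ⟪C x, u⟫ = ⟪x, B u⟫) (μ : ℝ) {x : H}
    (hx : C x ≠ 0) : ⟪x, ‖C x‖ ^ (-μ) • B (C x)⟫ = ‖C x‖ ^ (2 - μ) := by
  rw [real_inner_smul_right, ← hBC, real_inner_self_eq_norm_sq, sub_eq_neg_add]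
  exact (Real.rpow_add_natCast (norm_ne_zero_iff.mpr hx) (-μ) 2).symm

/-- The map `C` stands for `B*`. The derivative is one-sided because for `1 ≤ μ` a nonzero
trajectory reaches the origin without slowing down and then stays there, so it is not
differentiable at that time. -/
theorem finite_time_stabilization_nonlinear_general
    (hBC : ∀ x u, ⟪C x, u⟫ = ⟪x, B u⟫) {μ β : ℝ} (hμ : μ ∈ Ioc (0 : ℝ) 2) (hβ : 0 < β)
    (hC : ∀ x, β * ‖x‖ ^ 2 ≤ ‖C x‖ ^ 2)
    {G : H → H} (hG : ∀ x, C x ≠ 0 → G x = ‖C x‖ ^ (-μ) • B (C x))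
    {A₀ : H → H} (hA₀ : ∀ x, ⟪x, A₀ x⟫ ≤ 0) {f : H → ℝ} (hf : ∀ x, f x ≤ 0)
    {y : ℝ → H} (hy : ContinuousOn y (Ici 0))
    (hy' : ∀ t, 0 ≤ t → HasDerivWithinAt y (A₀ (y t) + f (y t) • y t - G (y t)) (Ici t) t)
    {T : ℝ} (hT : T = ‖y 0‖ ^ μ / (β ^ (1 - μ / 2) * μ)) :
    (∀ t ∈ Icc 0 T, ‖y t‖ ^ μ ≤ ‖y 0‖ ^ μ - β ^ (1 - μ / 2) * μ * t) ∧
    ∀ t, T ≤ t → y t = 0 := by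
  have hdamping (x : H) (hx : x ≠ 0) : β ^ (1 - μ / 2) * ‖x‖ ^ (2 - μ) ≤ ⟪x, G x⟫ := by
    have hCx : C x ≠ 0 := by
      have hpos : 0 < ‖C x‖ ^ 2 := lt_of_lt_of_le (by positivity) (hC x)
      simpa using hpos.ne'
    rw [hG x hCx, inner_norm_rpow_smul_adjoint hBC μ hCx, show 1 - μ / 2 = (2 - μ) / 2 by ring]
    exact rpow_half_mul_rpow_le_rpow hβ.le (sub_nonneg.mpr hμ.2) (norm_nonneg x)
      (norm_nonneg (C x)) (hC x)
  refine norm_rpow_le_sub_and_eq_zero_of_inner_deriv_right_le hμ.1 (by positivity) hy hy'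
    (fun t _ hyt ↦ ?_) hT
  have hdrift : f (y t) * ‖y t‖ ^ 2 ≤ 0 := mul_nonpos_of_nonpos_of_nonneg (hf _) (by positivity)
  rw [inner_sub_right, inner_add_right, real_inner_smul_right, real_inner_self_eq_norm_sq]
  linarith [hA₀ (y t), hdamping (y t) hyt]

end Feedback

/-- Finite-time stabilization of the closed-loop nonlinear system
`y' = A₀ y + f(y) y − G(y)` with the feedback operator
`G(y) = ‖B*y‖^{-μ} B B* y` (and `G(y) = 0` when `B*y = 0`). -/
theorem finite_time_stabilization_nonlinear
    {H U : Type*} [NormedAddCommGroup H] [InnerProductSpace ℝ H] [CompleteSpace H]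
    [NormedAddCommGroup U] [InnerProductSpace ℝ U] [CompleteSpace U]
    (B : U →L[ℝ] H) (μ β : ℝ) (hμ : μ ∈ Set.Ioo (0 : ℝ) 1) (hβ : 0 < β)
    (hB : ∀ y : H, β * ‖y‖ ^ 2 ≤ ‖(ContinuousLinearMap.adjoint B) y‖ ^ 2)
    (G : H → H)
    (hG : ∀ y : H, G y =
      if (ContinuousLinearMap.adjoint B) y ≠ 0 then
        (‖(ContinuousLinearMap.adjoint B) y‖ ^ (-μ)) • B ((ContinuousLinearMap.adjoint B) y)
      else 0)
    (A₀ : H → H) (hA₀ : ∀ x : H, ⟪x, A₀ x⟫ ≤ 0)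
    (f : H → ℝ) (hf : ∀ x : H, f x ≤ 0)
    (y : ℝ → H)
    (hy : ∀ t : ℝ, 0 ≤ t → HasDerivAt y (A₀ (y t) + f (y t) • y t - G (y t)) t)
    (T : ℝ) (hT : T = ‖y 0‖ ^ μ / (β ^ (1 - μ / 2) * μ)) :
    (∀ t ∈ Set.Icc (0 : ℝ) T, ‖y t‖ ^ μ ≤ ‖y 0‖ ^ μ - β ^ (1 - μ / 2) * μ * t) ∧
    (∀ t : ℝ, T ≤ t → y t = 0) := by
  exact finite_time_stabilization_nonlinear_general
    (fun x u ↦ ContinuousLinearMap.adjoint_inner_left B u x) ⟨hμ.1, by linarith [hμ.2]⟩ hβ hB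
    (fun x hx ↦ by rw [hG, if_pos hx]) hA₀ hf
    (fun t ht ↦ (hy t ht).continuousAt.continuousWithinAt)
    (fun t ht ↦ (hy t ht).hasDerivWithinAt) hT
end

section
/- Let H and U be real Hilbert spaces, B : U → H a bounded linear operator with adjoint B* : H → U, and μ ∈ (0,1). Define G : H → H by G(y) = ‖B*y‖^{−μ} B B* y if B*y ≠ 0 and G(y) = 0 if B*y = 0. Then G is a monotone operator: for all y₁, y₂ ∈ H, ⟨G(y₁) − G(y₂), y₁ − y₂⟩ ≥ 0. -/
open scoped RealInnerProductSpace Classical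

/-!
For a radial map `F a = φ ‖a‖ • a`, Cauchy–Schwarz bounds `re ⟪F a - F b, a - b⟫` below by
`(φ ‖a‖ * ‖a‖ - φ ‖b‖ * ‖b‖) * (‖a‖ - ‖b‖)`, so `F` is monotone as soon as `t ↦ φ t * t` is.
For `φ t = t ^ (-μ)` the latter function is `t ^ (1 - μ)` on `t > 0`. The feedback operator is the
conjugate `B ∘ F ∘ B†` of such a map.
-/

section MonotoneOperator

variable {𝕜 E : Type*} [RCLike 𝕜] [NormedAddCommGroup E] [InnerProductSpace 𝕜 E]

variable (𝕜) in
/-- Monotone (accretive) operators on an inner product space, here everywhere defined and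
single-valued; the real part makes the notion meaningful over `ℂ` as well as over `ℝ`. -/
def IsMonotoneOperator (F : E → E) : Prop :=
  ∀ x y, 0 ≤ RCLike.re (inner 𝕜 (F x - F y) (x - y))

theorem re_inner_smul_sub_smul_sub (r s : ℝ) (a b : E) :
    RCLike.re (inner 𝕜 ((r : 𝕜) • a - (s : 𝕜) • b) (a - b)) =
      r * ‖a‖ ^ 2 + s * ‖b‖ ^ 2 - (r + s) * RCLike.re (inner 𝕜 a b) := by
  simp only [inner_sub_left, inner_sub_right, inner_smul_left, RCLike.conj_ofReal, map_sub,
    RCLike.re_ofReal_mul, inner_self_eq_norm_sq, inner_re_symm b a]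
  ring

theorem mul_sub_norm_le_re_inner_smul_sub_smul_sub {r s : ℝ} (hr : 0 ≤ r) (hs : 0 ≤ s) (a b : E) :
    (r * ‖a‖ - s * ‖b‖) * (‖a‖ - ‖b‖) ≤
      RCLike.re (inner 𝕜 ((r : 𝕜) • a - (s : 𝕜) • b) (a - b)) :=
  calc (r * ‖a‖ - s * ‖b‖) * (‖a‖ - ‖b‖)
      = r * ‖a‖ ^ 2 + s * ‖b‖ ^ 2 - (r + s) * (‖a‖ * ‖b‖) := by ring
    _ ≤ r * ‖a‖ ^ 2 + s * ‖b‖ ^ 2 - (r + s) * RCLike.re (inner 𝕜 a b) := by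
      gcongr
      exact re_inner_le_norm a b
    _ = RCLike.re (inner 𝕜 ((r : 𝕜) • a - (s : 𝕜) • b) (a - b)) :=
      (re_inner_smul_sub_smul_sub r s a b).symm

theorem isMonotoneOperator_norm_smul {φ : ℝ → ℝ} (hφ : ∀ t, 0 ≤ t → 0 ≤ φ t)
    (hmono : MonotoneOn (fun t ↦ φ t * t) (Set.Ici 0)) :
    IsMonotoneOperator 𝕜 fun a : E ↦ (φ ‖a‖ : 𝕜) • a := fun a b ↦
  calc 0 ≤ (φ ‖a‖ * ‖a‖ - φ ‖b‖ * ‖b‖) * (‖a‖ - ‖b‖) :=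
        (hmono.monovaryOn monotoneOn_id).sub_mul_sub_nonneg (norm_nonneg b) (norm_nonneg a)
    _ ≤ RCLike.re (inner 𝕜 ((φ ‖a‖ : 𝕜) • a - (φ ‖b‖ : 𝕜) • b) (a - b)) :=
      mul_sub_norm_le_re_inner_smul_sub_smul_sub
        (hφ _ (norm_nonneg a)) (hφ _ (norm_nonneg b)) a b

theorem IsMonotoneOperator.conj_adjoint {H : Type*} [NormedAddCommGroup H] [InnerProductSpace 𝕜 H]
    [CompleteSpace H] [CompleteSpace E] {F : E → E} (hF : IsMonotoneOperator 𝕜 F)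
    (B : E →L[𝕜] H) : IsMonotoneOperator 𝕜 fun y ↦ B (F (B.adjoint y)) := fun x y ↦ by
  rw [← map_sub, ← ContinuousLinearMap.adjoint_inner_right, map_sub]
  exact hF (B.adjoint x) (B.adjoint y)

end MonotoneOperator

theorem monotoneOn_rpow_neg_mul_self {μ : ℝ} (hμ : μ ≤ 1) :
    MonotoneOn (fun t : ℝ ↦ t ^ (-μ) * t) (Set.Ici 0) := by
  intro s hs t ht hst
  obtain rfl | hs_pos := (Set.mem_Ici.1 hs).eq_or_lt
  · simpa only [mul_zero] using mul_nonneg (Real.rpow_nonneg ht (-μ)) ht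
  · have rpow_neg_mul_self {u : ℝ} (hu : 0 < u) : u ^ (-μ) * u = u ^ (1 - μ) := by
      rw [← Real.rpow_add_one hu.ne', neg_add_eq_sub]
    simpa only [rpow_neg_mul_self hs_pos, rpow_neg_mul_self (hs_pos.trans_le hst)] using
      Real.rpow_le_rpow hs_pos.le hst (sub_nonneg.2 hμ)

theorem feedback_operator_monotone_general {𝕜 H U : Type*} [RCLike 𝕜]
    [NormedAddCommGroup H] [InnerProductSpace 𝕜 H] [CompleteSpace H]
    [NormedAddCommGroup U] [InnerProductSpace 𝕜 U] [CompleteSpace U]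
    (B : U →L[𝕜] H) {μ : ℝ} (hμ : μ ≤ 1) {G : H → H}
    (hG : ∀ y, G y =
      if B.adjoint y ≠ 0 then ((‖B.adjoint y‖ ^ (-μ) : ℝ) : 𝕜) • B (B.adjoint y) else 0) :
    IsMonotoneOperator 𝕜 G := by
  have hG_conj : G = fun y ↦ B (((‖B.adjoint y‖ ^ (-μ) : ℝ) : 𝕜) • B.adjoint y) := by
    funext y
    rw [hG, map_smul, ite_eq_left_iff, not_not]
    intro hy
    rw [hy, map_zero, smul_zero]
  rw [hG_conj]
  exact (isMonotoneOperator_norm_smul (fun t ht ↦ Real.rpow_nonneg ht (-μ))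
    (monotoneOn_rpow_neg_mul_self hμ)).conj_adjoint B

/-- Monotonicity of the feedback operator
`G(y) = ‖B*y‖^{-μ} B B* y` (with `G(y) = 0` when `B*y = 0`). -/
theorem feedback_operator_monotone
    {H U : Type*} [NormedAddCommGroup H] [InnerProductSpace ℝ H] [CompleteSpace H]
    [NormedAddCommGroup U] [InnerProductSpace ℝ U] [CompleteSpace U]
    (B : U →L[ℝ] H) (μ : ℝ) (hμ : μ ∈ Set.Ioo (0 : ℝ) 1)
    (G : H → H)
    (hG : ∀ y : H, G y =
      if (ContinuousLinearMap.adjoint B) y ≠ 0 then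
        (‖(ContinuousLinearMap.adjoint B) y‖ ^ (-μ)) • B ((ContinuousLinearMap.adjoint B) y)
      else 0) :
    ∀ y₁ y₂ : H, 0 ≤ ⟪G y₁ - G y₂, y₁ - y₂⟫ :=
  feedback_operator_monotone_general B hμ.2.le hG
end

section
/- Let H and U be real Hilbert spaces, B : U → H a bounded linear operator with adjoint B* : H → U, and μ ∈ (0,1). Define G : H → H by G(y) = ‖B*y‖^{−μ} B B* y if B*y ≠ 0 and G(y) = 0 if B*y = 0. Then for all y₁, y₂ ∈ H, ⟨G(y₁) − G(y₂), y₁ − y₂⟩ ≥ (‖B*y₁‖^{1−μ} − ‖B*y₂‖^{1−μ})·(‖B*y₁‖ − ‖B*y₂‖), and in particular the right-hand side is nonnegative. -/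
open scoped RealInnerProductSpace Classical

/-!
Write `n u = u / ‖u‖` for the direction of `u`, with `n 0 = 0`. The feedback is
`G y = B (‖B* y‖ ^ (1 - μ) • n (B* y))`, with no case distinction at the kernel of `B*`, so moving
`B` across the inner product reduces the estimate to `u = B* y₁` and `v = B* y₂` in `U`. There
`⟪n u, u⟫ = ‖u‖` and, by Cauchy–Schwarz, `⟪n u, v⟫ ≤ ‖v‖`; hence
`⟪s • n u - t • n v, u - v⟫ ≥ s (‖u‖ - ‖v‖) + t (‖v‖ - ‖u‖)` for all `s, t ≥ 0`.
The lower bound is nonnegative since `r ↦ r ^ (1 - μ)` is monotone on `[0, ∞)`.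
-/

section Normalize

variable {E : Type*} [NormedAddCommGroup E]

theorem norm_rpow_neg_smul [NormedSpace ℝ E] (u : E) (μ : ℝ) :
    ‖u‖ ^ (-μ) • u = ‖u‖ ^ (1 - μ) • NormedSpace.normalize u := by
  rcases eq_or_ne u 0 with rfl | hu
  · simp
  · have hnorm : ‖u‖ ^ (-μ) = ‖u‖ ^ (1 - μ) * ‖u‖⁻¹ := by
      rw [← div_eq_mul_inv, ← Real.rpow_sub_one (norm_ne_zero_iff.mpr hu)]
      congr 1
      ring
    rw [hnorm, mul_smul, NormedSpace.normalize]

variable [InnerProductSpace ℝ E]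

theorem real_inner_normalize_self (u : E) : ⟪NormedSpace.normalize u, u⟫ = ‖u‖ := by
  rw [NormedSpace.normalize, real_inner_smul_self_left, ← mul_assoc, inv_mul_mul_self]

theorem real_inner_normalize_le_norm (u v : E) : ⟪NormedSpace.normalize u, v⟫ ≤ ‖v‖ := by
  have norm_le_one : ‖NormedSpace.normalize u‖ ≤ 1 := by
    rw [NormedSpace.normalize, norm_smul, norm_inv, norm_norm]
    exact inv_mul_le_one
  exact (real_inner_le_norm _ v).trans (mul_le_of_le_one_left (norm_nonneg v) norm_le_one)

theorem sub_mul_norm_sub_norm_le_inner_smul_normalize_sub {s t : ℝ} (hs : 0 ≤ s) (ht : 0 ≤ t)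
    (u v : E) :
    (s - t) * (‖u‖ - ‖v‖) ≤
      ⟪s • NormedSpace.normalize u - t • NormedSpace.normalize v, u - v⟫ :=
  calc
    (s - t) * (‖u‖ - ‖v‖) = s * (‖u‖ - ‖v‖) - t * (‖u‖ - ‖v‖) := sub_mul ..
    _ ≤ s * (‖u‖ - ⟪NormedSpace.normalize u, v⟫) - t * (⟪NormedSpace.normalize v, u⟫ - ‖v‖) := by
      gcongr
      · exact real_inner_normalize_le_norm u v
      · exact real_inner_normalize_le_norm v u
    _ = ⟪s • NormedSpace.normalize u - t • NormedSpace.normalize v, u - v⟫ := by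
      rw [inner_sub_left, real_inner_smul_left, real_inner_smul_left, inner_sub_right,
        inner_sub_right, real_inner_normalize_self, real_inner_normalize_self]

end Normalize

theorem rpow_sub_rpow_mul_sub_nonneg {a b p : ℝ} (ha : 0 ≤ a) (hb : 0 ≤ b) (hp : 0 ≤ p) :
    0 ≤ (a ^ p - b ^ p) * (a - b) :=
  ((Real.monotoneOn_rpow_Ici_of_exponent_nonneg hp).monovaryOn monotoneOn_id).sub_mul_sub_nonneg
    hb ha

theorem feedback_operator_monotone_estimate_general
    {H U : Type*} [NormedAddCommGroup H] [InnerProductSpace ℝ H]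
    [NormedAddCommGroup U] [InnerProductSpace ℝ U]
    (B : U →ₗ[ℝ] H) (A : H →ₗ[ℝ] U) (hBA : ∀ u y, ⟪B u, y⟫ = ⟪u, A y⟫)
    {μ : ℝ} (hμ : μ ≤ 1) (G : H → H)
    (hG : ∀ y, G y = if A y ≠ 0 then ‖A y‖ ^ (-μ) • B (A y) else 0) (y₁ y₂ : H) :
    (‖A y₁‖ ^ (1 - μ) - ‖A y₂‖ ^ (1 - μ)) * (‖A y₁‖ - ‖A y₂‖) ≤ ⟪G y₁ - G y₂, y₁ - y₂⟫ ∧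
      0 ≤ (‖A y₁‖ ^ (1 - μ) - ‖A y₂‖ ^ (1 - μ)) * (‖A y₁‖ - ‖A y₂‖) := by
  have G_eq (y : H) : G y = B (‖A y‖ ^ (1 - μ) • NormedSpace.normalize (A y)) := by
    rw [hG, ← norm_rpow_neg_smul, map_smul, ite_eq_left_iff, not_not]
    intro hy
    rw [hy, map_zero, smul_zero]
  constructor
  · rw [G_eq, G_eq, ← map_sub, hBA, map_sub]
    exact sub_mul_norm_sub_norm_le_inner_smul_normalize_sub
      (by positivity) (by positivity) (A y₁) (A y₂)
  · exact rpow_sub_rpow_mul_sub_nonneg (norm_nonneg _) (norm_nonneg _) (sub_nonneg.mpr hμ)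

/-- Quantitative monotonicity estimate for the feedback operator
`G(y) = ‖B*y‖^{-μ} B B* y` (with `G(y) = 0` when `B*y = 0`):
`⟪G y₁ − G y₂, y₁ − y₂⟫ ≥ (a^{1−μ} − b^{1−μ})(a − b) ≥ 0`
with `a = ‖B*y₁‖`, `b = ‖B*y₂‖`. -/
theorem feedback_operator_monotone_estimate
    {H U : Type*} [NormedAddCommGroup H] [InnerProductSpace ℝ H] [CompleteSpace H]
    [NormedAddCommGroup U] [InnerProductSpace ℝ U] [CompleteSpace U]
    (B : U →L[ℝ] H) (μ : ℝ) (hμ : μ ∈ Set.Ioo (0 : ℝ) 1)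
    (G : H → H)
    (hG : ∀ y : H, G y =
      if (ContinuousLinearMap.adjoint B) y ≠ 0 then
        (‖(ContinuousLinearMap.adjoint B) y‖ ^ (-μ)) • B ((ContinuousLinearMap.adjoint B) y)
      else 0) :
    ∀ y₁ y₂ : H,
      (‖(ContinuousLinearMap.adjoint B) y₁‖ ^ (1 - μ) -
          ‖(ContinuousLinearMap.adjoint B) y₂‖ ^ (1 - μ)) *
        (‖(ContinuousLinearMap.adjoint B) y₁‖ - ‖(ContinuousLinearMap.adjoint B) y₂‖) ≤
        ⟪G y₁ - G y₂, y₁ - y₂⟫ ∧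
      0 ≤ (‖(ContinuousLinearMap.adjoint B) y₁‖ ^ (1 - μ) -
          ‖(ContinuousLinearMap.adjoint B) y₂‖ ^ (1 - μ)) *
        (‖(ContinuousLinearMap.adjoint B) y₁‖ - ‖(ContinuousLinearMap.adjoint B) y₂‖) := by
  exact feedback_operator_monotone_estimate_general B.toLinearMap B.adjoint.toLinearMap
    (fun u y => (B.adjoint_inner_right u y).symm) hμ.2.le G hG
end
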